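/- Let ρ, σ be density matrices and 0 < α < 1. Define Q_α(ρ‖σ) := α ∫₀^∞ γ^{α-1} Tr[σ {ρ > γσ}] dγ and D_α := (log Q_α)/(α-1). Then D_α(ρ‖σ) = (α/(1-α)) · D_{1-α}(σ‖ρ), equivalently Q_α(ρ‖σ) = Q_{1-α}(σ‖ρ). -/

import Mathlib

open MeasureTheory Matrix
open scoped ComplexOrder
noncomputable section

/-- The positive part `(X)₊` of a Hermitian matrix, via continuous functional calculus. -/
def mposPart {n : ℕ} (X : Matrix (Fin n) (Fin n) ℂ) : Matrix (Fin n) (Fin n) ℂ :=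
  cfc (fun x : ℝ => max x 0) X

/-- The spectral projection of a Hermitian matrix onto its strictly positive part,
so that `projPos (A - γ • B)` is the projection `{A > γB}`. -/
def projPos {n : ℕ} (X : Matrix (Fin n) (Fin n) ℂ) : Matrix (Fin n) (Fin n) ℂ :=
  cfc (fun x : ℝ => if 0 < x then (1:ℝ) else 0) X

/-- The spectral projection of a Hermitian matrix onto its nonnegative part,
so that `projNonneg (γ • B - A)` is the projection `{A ≤ γB}`. -/
def projNonneg {n : ℕ} (X : Matrix (Fin n) (Fin n) ℂ) : Matrix (Fin n) (Fin n) ℂ :=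
  cfc (fun x : ℝ => if 0 ≤ x then (1:ℝ) else 0) X

/-- Matrix logarithm via functional calculus. -/
def mlog {n : ℕ} (X : Matrix (Fin n) (Fin n) ℂ) : Matrix (Fin n) (Fin n) ℂ :=
  cfc Real.log X

/-- Real matrix power via functional calculus (`Real.rpow`, so negative powers of
positive semidefinite matrices are taken on the support). -/
def mpow {n : ℕ} (X : Matrix (Fin n) (Fin n) ℂ) (a : ℝ) : Matrix (Fin n) (Fin n) ℂ :=
  cfc (fun x : ℝ => x ^ a) X

/-- The layer-cake quasi Rényi divergence
`Q_α(ρ‖σ) = α ∫₀^∞ γ^{α-1} Tr[σ{ρ > γσ}] dγ`. -/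
def layerQ {n : ℕ} (ρ σ : Matrix (Fin n) (Fin n) ℂ) (a : ℝ) : ℝ :=
  a * ∫ γ in Set.Ioi (0:ℝ), γ ^ (a - 1) * (Matrix.trace (σ * projPos (ρ - γ • σ))).re

lemma lq_hasDeriv (f g : ℝ → ℝ) 
    (h2 : ∀ s t, f t - (s - t) * g t ≤ f s) (t : ℝ) (hc : ContinuousAt g t) :
    HasDerivAt f (-g t) t := by
  rw [hasDerivAt_iff_isLittleO, Asymptotics.isLittleO_iff]
  intro c hcpos
  have : ∀ᶠ s in nhds t, |g s - g t| < c := by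
    have := Metric.continuousAt_iff'.1 hc c hcpos
    simpa [Real.dist_eq] using this
  filter_upwards [this] with s hs
  have a := h2 s t
  have b := h2 t s
  simp only [smul_eq_mul, Real.norm_eq_abs]
  have e : |f s - f t - (s - t) * -g t| ≤ |(g s - g t) * (s - t)| := by
    rw [abs_of_nonneg (by linarith)]
    refine le_trans ?_ (neg_le_abs _)
    nlinarith
  rw [abs_mul] at e
  exact e.trans (mul_le_mul_of_nonneg_right hs.le (abs_nonneg _))

lemma lq_analysis (g h m k : ℝ → ℝ) (α : ℝ) (hα0 : 0 < α) (hα1 : α < 1)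
    (hg0 : ∀ t, 0 ≤ g t) (hg1 : ∀ t, g t ≤ 1) (hh1 : ∀ t, h t ≤ 1)
    (h2 : ∀ s t, h t - s * g t ≤ h s - s * g s)
    (h3 : ∀ s, 0 < s → h s - s * g s ≤ (1 - m s) - s * (1 - k s))
    (h3' : ∀ s t, 0 < t → (1 - m t) - s * (1 - k t) ≤ h s - s * g s)
    (h4 : ∀ s, 1 - s ≤ h s - s * g s) (h5 : ∀ s, 0 ≤ h s - s * g s) :
    α * ∫ t in Set.Ioi (0:ℝ), t ^ (α - 1) * g t =
      (1 - α) * ∫ t in Set.Ioi (0:ℝ), t ^ (α - 2) * m t := by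
  set f : ℝ → ℝ := fun s => h s - s * g s with hf
  have hanti : Antitone g := by
    intro a b hab
    rcases hab.eq_or_lt with rfl | hab
    · rfl
    have := h2 a b
    have := h2 b a
    by_contra hcon
    push Not at hcon
    nlinarith
  have hsub : ∀ s t, f t - (s - t) * g t ≤ f s := by
    intro s t
    have := h2 s t
    simp only [hf]; linarith
  have hC := hanti.countable_not_continuousAt
  set C := {x | ¬ ContinuousAt g x} with hCdef
  have hderiv : ∀ t, t ∉ C → HasDerivAt f (-g t) t := by
    intro t ht
    exact lq_hasDeriv f g hsub t (by simpa [hCdef] using ht)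
  have hm : ∀ t, 0 < t → t ∉ C → m t = 1 - h t := by
    intro t ht htC
    have d : HasDerivAt (fun s => f s - ((1 - m t) - s * (1 - k t))) (-g t + (1 - k t)) t := by
      have := (hderiv t htC).sub (((hasDerivAt_id t).mul_const (1 - k t)).const_sub (1 - m t))
      convert! this using 1
      ring
    have hmin : IsLocalMin (fun s => f s - ((1 - m t) - s * (1 - k t))) t := by
      refine Filter.Eventually.of_forall fun s => ?_
      have a := h3 t ht
      have b := h3' s t ht
      simp only [hf]
      linarith
    have e := hmin.hasDerivAt_eq_zero d
    have a := h3 t ht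
    have b := h3' t t ht
    have : 1 - k t = g t := by linarith
    rw [this] at a b
    linarith
  have hcont : Continuous f := by
    have : LipschitzWith 1 f := by
      refine LipschitzWith.of_le_add_mul 1 fun x y => ?_
      have a := hsub y x
      have b := hg0 x
      have c := hg1 x
      simp only [NNReal.coe_one, one_mul, Real.dist_eq]
      have : (y - x) * g x ≤ |x - y| := by
        calc (y - x) * g x ≤ |(y - x) * g x| := le_abs_self _
          _ = |x - y| * g x := by rw [abs_mul, abs_of_nonneg b, abs_sub_comm]
          _ ≤ |x - y| := mul_le_of_le_one_right (abs_nonneg _) c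
      linarith
    exact this.continuous
  have hgm : Measurable g := hanti.measurable
  have hhm : Measurable h := by
    have : h = fun s => f s + s * g s := by ext s; simp [hf]
    rw [this]
    exact hcont.measurable.add (measurable_id.mul hgm)
  -- integrability
  have key : ∀ u : ℝ → ℝ, Measurable u → (∀ t, 0 < t → 0 ≤ u t) →
      (∀ t, 0 < t → u t ≤ 1) → (∀ t, 0 < t → t * u t ≤ 1) →
      IntegrableOn (fun t => t ^ (α - 1) * u t) (Set.Ioi 0) := by
    intro u hum hu0 hu1 hut
    have hmeas : Measurable (fun t : ℝ => t ^ (α - 1) * u t) := by fun_prop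
    rw [← Set.Ioc_union_Ioi_eq_Ioi (zero_le_one' ℝ)]
    refine IntegrableOn.union ?_ ?_
    · have i1 : IntegrableOn (fun t : ℝ => t ^ (α - 1)) (Set.Ioc 0 1) := by
        have := intervalIntegral.intervalIntegrable_rpow' (a := 0) (b := 1) (r := α - 1) (by linarith)
        rwa [intervalIntegrable_iff_integrableOn_Ioc_of_le zero_le_one] at this
      refine i1.mono' hmeas.aestronglyMeasurable ?_
      refine (ae_restrict_iff' measurableSet_Ioc).2 (Filter.Eventually.of_forall fun t ht => ?_)
      have p : 0 ≤ t ^ (α - 1) := Real.rpow_nonneg ht.1.le _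
      rw [Real.norm_eq_abs, abs_of_nonneg (mul_nonneg p (hu0 t ht.1))]
      exact mul_le_of_le_one_right p (hu1 t ht.1)
    · have i1 : IntegrableOn (fun t : ℝ => t ^ (α - 2)) (Set.Ioi 1) :=
        integrableOn_Ioi_rpow_of_lt (by linarith) one_pos
      refine i1.mono' hmeas.aestronglyMeasurable ?_
      refine (ae_restrict_iff' measurableSet_Ioi).2 (Filter.Eventually.of_forall fun t ht => ?_)
      have ht0 : 0 < t := lt_trans one_pos ht
      have p : 0 ≤ t ^ (α - 1) := Real.rpow_nonneg ht0.le _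
      rw [Real.norm_eq_abs, abs_of_nonneg (mul_nonneg p (hu0 t ht0))]
      have q : t ^ (α - 1) = t ^ (α - 2) * t := by
        rw [← Real.rpow_add_one ht0.ne']; ring_nf
      rw [q, mul_assoc]
      exact mul_le_of_le_one_right (Real.rpow_nonneg ht0.le _) (hut t ht0)
  have I1 : IntegrableOn (fun t => t ^ (α - 1) * g t) (Set.Ioi 0) := by
    refine key g hgm (fun t _ => hg0 t) (fun t _ => hg1 t) (fun t ht => ?_)
    have := h5 t
    have := hh1 t
    linarith
  have hq : ∀ t : ℝ, 0 < t → ∀ x : ℝ, t ^ (α - 1) * (x / t) = t ^ (α - 2) * x := by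
    intro t ht0 x
    have q : t ^ (α - 1) = t ^ (α - 2) * t := by
      rw [← Real.rpow_add_one ht0.ne']; ring_nf
    rw [q]; field_simp
  have I2 : IntegrableOn (fun t => t ^ (α - 2) * (1 - h t)) (Set.Ioi 0) := by
    have := key (fun t => (1 - h t) / t) (by fun_prop)
      (fun t ht => div_nonneg (by linarith [hh1 t]) ht.le)
      (fun t ht => by
        rw [div_le_one ht]
        nlinarith [h4 t, hg0 t])
      (fun t ht => by
        rw [mul_div_cancel₀ _ ht.ne']
        nlinarith [h5 t, hg0 t])
    refine this.congr_fun (fun t ht => ?_) measurableSet_Ioi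
    exact hq t ht _
  have Em : ∫ t in Set.Ioi (0:ℝ), t ^ (α - 2) * m t = ∫ t in Set.Ioi (0:ℝ), t ^ (α - 2) * (1 - h t) := by
    refine setIntegral_congr_ae measurableSet_Ioi ?_
    have : ∀ᵐ t, t ∉ C := (hC.ae_notMem volume)
    filter_upwards [this] with t ht ht0
    rw [hm t ht0 ht]
  rw [Em]
  set G : ℝ → ℝ := fun t => t ^ (α - 1) * (1 - f t) with hG
  set G' : ℝ → ℝ := fun t => α * (t ^ (α - 1) * g t) - (1 - α) * (t ^ (α - 2) * (1 - h t)) with hG'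
  have IG : IntegrableOn G' (Set.Ioi 0) := (I1.const_mul α).sub (I2.const_mul (1 - α))
  have hf1 : ∀ t, 0 ≤ t → f t ≤ 1 := by
    intro t ht
    have := hh1 t
    have := mul_nonneg ht (hg0 t)
    simp only [hf]; linarith
  have hG0 : G 0 = 0 := by
    simp [hG, Real.zero_rpow (show α - 1 ≠ 0 by linarith)]
  have Gnn : ∀ t, 0 ≤ t → 0 ≤ G t := fun t ht =>
    mul_nonneg (Real.rpow_nonneg ht _) (by linarith [hf1 t ht])
  have hGc0 : ContinuousWithinAt G (Set.Ici 0) 0 := by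
    unfold ContinuousWithinAt
    rw [hG0]
    have lim : Filter.Tendsto (fun t : ℝ => t ^ α) (nhdsWithin 0 (Set.Ici 0)) (nhds 0) := by
      have := (Real.continuous_rpow_const hα0.le).tendsto 0
      rw [Real.zero_rpow hα0.ne'] at this
      exact this.mono_left nhdsWithin_le_nhds
    refine tendsto_of_tendsto_of_tendsto_of_le_of_le' tendsto_const_nhds lim ?_ ?_
    · filter_upwards [self_mem_nhdsWithin] with t ht using Gnn t ht
    · filter_upwards [self_mem_nhdsWithin] with t ht
      rcases (show (0:ℝ) ≤ t from ht).eq_or_lt with rfl | ht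
      · rw [hG0, Real.zero_rpow hα0.ne']
      have : t ^ α = t ^ (α - 1) * t := by
        rw [← Real.rpow_add_one ht.ne']; ring_nf
      rw [this]
      exact mul_le_mul_of_nonneg_left (by have := h4 t; simp only [hf]; linarith) (Real.rpow_nonneg ht.le _)
  have hGc : ContinuousOn G (Set.Ici 0) := by
    intro t ht
    rcases (show (0:ℝ) ≤ t from ht).eq_or_lt with rfl | ht
    · exact hGc0
    · exact ((Real.continuousAt_rpow_const t _ (Or.inl ht.ne')).mul
        (continuousAt_const.sub hcont.continuousAt)).continuousWithinAt
  have hGd : ∀ t, 0 < t → t ∉ C → HasDerivAt G (G' t) t := by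
    intro t ht htC
    have := (Real.hasDerivAt_rpow_const (p := α - 1) (Or.inl ht.ne')).mul ((hderiv t htC).const_sub 1)
    convert! this using 1
    have q : t ^ (α - 1) = t ^ (α - 2) * t := by
      rw [← Real.rpow_add_one ht.ne']; ring_nf
    have q' : α - 1 - 1 = α - 2 := by ring
    simp only [hG', hf, q', q]
    ring
  have FTC : ∀ R : ℝ, 0 ≤ R → ∫ t in (0:ℝ)..R, G' t = G R := by
    intro R hR
    have := integral_eq_of_hasDerivAt_off_countable_of_le G G' hR hC
      (hGc.mono Set.Icc_subset_Ici_self) (fun x hx => hGd x hx.1.1 hx.2)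
      ((intervalIntegrable_iff_integrableOn_Ioc_of_le hR).2 (IG.mono_set Set.Ioc_subset_Ioi_self))
    rw [this, hG0, sub_zero]
  have L1 := intervalIntegral_tendsto_integral_Ioi 0 IG Filter.tendsto_id
  have L2 : Filter.Tendsto G Filter.atTop (nhds 0) := by
    have lim : Filter.Tendsto (fun t : ℝ => t ^ (-(1 - α))) Filter.atTop (nhds 0) :=
      tendsto_rpow_neg_atTop (by linarith)
    refine tendsto_of_tendsto_of_tendsto_of_le_of_le' tendsto_const_nhds lim ?_ ?_
    · filter_upwards [Filter.eventually_ge_atTop 0] with t ht using Gnn t ht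
    · filter_upwards [Filter.eventually_ge_atTop 0] with t ht
      rw [neg_sub]
      exact mul_le_of_le_one_right (Real.rpow_nonneg ht _) (by have := h5 t; simp only [hf]; linarith)
  have L3 : Filter.Tendsto (fun R : ℝ => ∫ t in (0:ℝ)..R, G' t) Filter.atTop (nhds 0) :=
    L2.congr' (by filter_upwards [Filter.eventually_ge_atTop 0] with t ht using (FTC t ht).symm)
  have Z : ∫ t in Set.Ioi (0:ℝ), G' t = 0 := tendsto_nhds_unique L1 L3
  have Z2 : ∫ t in Set.Ioi (0:ℝ), G' t = α * (∫ t in Set.Ioi (0:ℝ), t ^ (α - 1) * g t)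
      - (1 - α) * ∫ t in Set.Ioi (0:ℝ), t ^ (α - 2) * (1 - h t) := by
    simp only [hG']
    rw [integral_sub (I1.const_mul α) (I2.const_mul (1 - α)), integral_const_mul, integral_const_mul]
  linarith

open scoped MatrixOrder in
lemma lq_trace_nonneg {n : ℕ} {A B : Matrix (Fin n) (Fin n) ℂ} (hA : A.PosSemidef)
    (hB : B.PosSemidef) : 0 ≤ (Matrix.trace (A * B)).re := by
  obtain ⟨C, rfl⟩ := CStarAlgebra.nonneg_iff_eq_star_mul_self.1 hB.nonneg
  rw [← mul_assoc, Matrix.trace_mul_comm, ← mul_assoc]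
  have := (hA.mul_mul_conjTranspose_same C).trace_nonneg
  exact (Complex.nonneg_iff.1 this).1

open scoped MatrixOrder in
lemma lq_cfc_nonneg {n : ℕ} (X : Matrix (Fin n) (Fin n) ℂ) (f : ℝ → ℝ) (hf : ∀ x, 0 ≤ f x) :
    (cfc f X).PosSemidef := 
  (cfc_nonneg (fun x _ => hf x)).posSemidef

lemma lq_cont {n : ℕ} (X : Matrix (Fin n) (Fin n) ℂ) (f : ℝ → ℝ) :
    ContinuousOn f (spectrum ℝ X) := X.finite_real_spectrum.continuousOn f

lemma lq_projPos_pos {n : ℕ} (X : Matrix (Fin n) (Fin n) ℂ) : (projPos X).PosSemidef :=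
  lq_cfc_nonneg X _ fun x => by split_ifs <;> norm_num

lemma lq_projPos_le {n : ℕ} (X : Matrix (Fin n) (Fin n) ℂ) (hX : X.IsHermitian) :
    (1 - projPos X).PosSemidef := by
  have hX' : IsSelfAdjoint X := hX
  have : 1 - projPos X = cfc (fun x : ℝ => 1 - (if 0 < x then (1:ℝ) else 0)) X := by
    rw [cfc_sub (fun _ => (1:ℝ)) _ X (lq_cont X _) (lq_cont X _), cfc_const_one ℝ X]
    rfl
  rw [this]
  exact lq_cfc_nonneg X _ fun x => by split_ifs <;> norm_num

lemma lq_opt {n : ℕ} (X Q : Matrix (Fin n) (Fin n) ℂ) (hX : X.IsHermitian)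
    (hQ : Q.PosSemidef) (hQ1 : (1 - Q).PosSemidef) :
    (Matrix.trace (X * Q)).re ≤ (Matrix.trace (X * projPos X)).re := by
  have hX' : IsSelfAdjoint X := hX
  have e1 : X * projPos X = cfc (fun x : ℝ => max x 0) X := by
    have e0 : X * projPos X = cfc (fun x : ℝ => x) X * projPos X := by rw [cfc_id' ℝ X]
    rw [e0, projPos, ← cfc_mul _ _ X (lq_cont X _) (lq_cont X _)]
    refine cfc_congr fun x _ => ?_
    split_ifs with h
    · simp [h.le]
    · simp [not_lt.1 h]
  have e2 : X = cfc (fun x : ℝ => max x 0) X - cfc (fun x : ℝ => max (-x) 0) X := by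
    conv_lhs => rw [← cfc_id' ℝ X]
    rw [← cfc_sub _ _ X (lq_cont X _) (lq_cont X _)]
    refine cfc_congr fun x _ => ?_
    rcases le_total x 0 with h | h <;> simp [h]
  have p1 := lq_trace_nonneg (lq_cfc_nonneg X (fun x : ℝ => max x 0) fun x => le_max_right _ _) hQ1
  have p2 := lq_trace_nonneg (lq_cfc_nonneg X (fun x : ℝ => max (-x) 0) fun x => le_max_right _ _) hQ
  rw [e1]
  have e3 : X * Q = cfc (fun x : ℝ => max x 0) X * Q - cfc (fun x : ℝ => max (-x) 0) X * Q := by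
    rw [← sub_mul, ← e2]
  rw [e3]
  simp only [mul_sub, mul_one, Matrix.trace_sub, Complex.sub_re] at p1 ⊢
  linarith

lemma lq_tr {n : ℕ} (ρ σ Q : Matrix (Fin n) (Fin n) ℂ) (s : ℝ) :
    (Matrix.trace ((ρ - s • σ) * Q)).re
      = (Matrix.trace (ρ * Q)).re - s * (Matrix.trace (σ * Q)).re := by
  simp [sub_mul, Matrix.trace_sub, Matrix.trace_smul]

lemma lq_main {n : ℕ} (ρ σ : Matrix (Fin n) (Fin n) ℂ)
    (hρ : ρ.PosSemidef) (hσ : σ.PosSemidef) (hρ1 : ρ.trace = 1) (hσ1 : σ.trace = 1)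
    (α : ℝ) (hα0 : 0 < α) (hα1 : α < 1) :
    layerQ ρ σ α = layerQ σ ρ (1 - α) := by
  have herm : ∀ s : ℝ, (ρ - s • σ).IsHermitian := fun s =>
    hρ.1.sub (hσ.1.smul (IsSelfAdjoint.all s))
  have herm' : ∀ s : ℝ, (σ - s • ρ).IsHermitian := fun s =>
    hσ.1.sub (hρ.1.smul (IsSelfAdjoint.all s))
  have le1 : ∀ τ Q : Matrix (Fin n) (Fin n) ℂ, τ.PosSemidef → τ.trace = 1 →
      (1 - Q).PosSemidef → (Matrix.trace (τ * Q)).re ≤ 1 := by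
    intro τ Q hτ h1 hQ
    have := lq_trace_nonneg hτ hQ
    simp only [mul_sub, mul_one, Matrix.trace_sub, Complex.sub_re, h1, Complex.one_re] at this
    linarith
  have compl : ∀ τ Q : Matrix (Fin n) (Fin n) ℂ, τ.trace = 1 →
      (Matrix.trace (τ * (1 - Q))).re = 1 - (Matrix.trace (τ * Q)).re := by
    intro τ Q h1
    simp [mul_sub, Matrix.trace_sub, h1]
  have opt : ∀ (s : ℝ) (Q : Matrix (Fin n) (Fin n) ℂ), Q.PosSemidef → (1 - Q).PosSemidef →
      (Matrix.trace (ρ * Q)).re - s * (Matrix.trace (σ * Q)).re ≤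
      (Matrix.trace (ρ * projPos (ρ - s • σ))).re
        - s * (Matrix.trace (σ * projPos (ρ - s • σ))).re := by
    intro s Q h0 h1
    rw [← lq_tr, ← lq_tr]
    exact lq_opt _ _ (herm s) h0 h1
  have opt' : ∀ (s : ℝ) (Q : Matrix (Fin n) (Fin n) ℂ), Q.PosSemidef → (1 - Q).PosSemidef →
      (Matrix.trace (σ * Q)).re - s * (Matrix.trace (ρ * Q)).re ≤
      (Matrix.trace (σ * projPos (σ - s • ρ))).re
        - s * (Matrix.trace (ρ * projPos (σ - s • ρ))).re := by
    intro s Q h0 h1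
    rw [← lq_tr, ← lq_tr]
    exact lq_opt _ _ (herm' s) h0 h1
  have zero_psd : (0 : Matrix (Fin n) (Fin n) ℂ).PosSemidef := Matrix.PosSemidef.zero
  have one_psd : (1 : Matrix (Fin n) (Fin n) ℂ).PosSemidef := Matrix.PosSemidef.one
  have P0 := fun s : ℝ => lq_projPos_pos (ρ - s • σ)
  have P1 := fun s : ℝ => lq_projPos_le (ρ - s • σ) (herm s)
  have P0' := fun s : ℝ => lq_projPos_pos (σ - s • ρ)
  have P1' := fun s : ℝ => lq_projPos_le (σ - s • ρ) (herm' s)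
  have key := lq_analysis
    (fun t => (Matrix.trace (σ * projPos (ρ - t • σ))).re)
    (fun t => (Matrix.trace (ρ * projPos (ρ - t • σ))).re)
    (fun t => (Matrix.trace (ρ * projPos (σ - t⁻¹ • ρ))).re)
    (fun t => (Matrix.trace (σ * projPos (σ - t⁻¹ • ρ))).re) α hα0 hα1
    (fun t => lq_trace_nonneg hσ (P0 t))
    (fun t => le1 _ _ hσ hσ1 (P1 t))
    (fun t => le1 _ _ hρ hρ1 (P1 t))
    (fun s t => opt s _ (P0 t) (P1 t))
    (fun s hs => by
      have := opt' s⁻¹ (1 - projPos (ρ - s • σ)) (P1 s) (by simpa using P0 s)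
      rw [compl _ _ hσ1, compl _ _ hρ1] at this
      have h := mul_le_mul_of_nonneg_left this hs.le
      simp only [mul_sub, mul_inv_cancel_left₀ hs.ne', mul_one, mul_inv_cancel₀ hs.ne'] at h
      linarith)
    (fun s t ht => by
      have := opt s (1 - projPos (σ - t⁻¹ • ρ)) (P1' _) (by simpa using P0' _)
      rwa [compl _ _ hσ1, compl _ _ hρ1] at this)
    (fun s => by
      have := opt s 1 one_psd (by simpa using zero_psd)
      simpa [hρ1, hσ1] using this)
    (fun s => by
      have := opt s 0 zero_psd (by simpa using one_psd)
      simpa using this)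
  unfold layerQ
  rw [key]
  congr 1
  rw [← integral_comp_rpow_Ioi (fun γ : ℝ => γ ^ (1 - α - 1) *
    (Matrix.trace (ρ * projPos (σ - γ • ρ))).re) (p := -1) (by norm_num)]
  refine setIntegral_congr_fun measurableSet_Ioi fun t ht => ?_
  have ht' : (0:ℝ) < t := ht
  simp only [Real.rpow_neg_one, smul_eq_mul, abs_neg, abs_one, one_mul]
  rw [Real.inv_rpow ht'.le, ← Real.rpow_neg ht'.le, ← mul_assoc, ← Real.rpow_add ht']
  congr 2
  ring

/-- for density matrices and `0 < α < 1`, `Q_α(ρ‖σ) = Q_{1-α}(σ‖ρ)`,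
equivalently `D_α(ρ‖σ) = (α/(1-α)) D_{1-α}(σ‖ρ)` with `D_α := log Q_α / (α-1)`. -/
theorem layerQ_skew_symmetry {n : ℕ} (ρ σ : Matrix (Fin n) (Fin n) ℂ)
    (hρ : ρ.PosSemidef) (hσ : σ.PosSemidef) (hρ1 : ρ.trace = 1) (hσ1 : σ.trace = 1)
    (α : ℝ) (hα0 : 0 < α) (hα1 : α < 1) :
    layerQ ρ σ α = layerQ σ ρ (1 - α) ∧
    Real.log (layerQ ρ σ α) / (α - 1)
      = (α / (1 - α)) * (Real.log (layerQ σ ρ (1 - α)) / ((1 - α) - 1)) := by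

  have h := lq_main ρ σ hρ hσ hρ1 hσ1 α hα0 hα1
  refine ⟨h, ?_⟩
  rw [h]
  have h1 : α - 1 ≠ 0 := by linarith
  have h2 : 1 - α ≠ 0 := by linarith
  have h3 : 1 - α - 1 ≠ 0 := by linarith
  field_simp
  ring
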